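/- arXiv:gr-qc/0502089 — 7 statements merged into one kernel-verified Lean document; each statement's English description precedes it below -/
import Mathlib

section
/- For every real (2n)×(2n) matrix g and every n-tuple of real (2n)×(2n) matrices A₁, …, Aₙ, one has F(g·A₁·gᵀ, …, g·Aₙ·gᵀ) = det(g) · F(A₁, …, Aₙ). -/
/-- The multilinear ε-contraction polynomial on `n`-tuples of real `(2n)×(2n)` matrices:
`F(A₁, …, Aₙ) = Σ_{σ ∈ S_{2n}} sgn(σ) · ∏_{i=1}^{n} (A_i)_{σ(2i−1), σ(2i)}`. -/
noncomputable def epsContract (n : ℕ) (A : Fin n → Matrix (Fin (2 * n)) (Fin (2 * n)) ℝ) : ℝ :=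
  ∑ σ : Equiv.Perm (Fin (2 * n)),
    ((Equiv.Perm.sign σ : ℤ) : ℝ) *
      ∏ i : Fin n,
        A i (σ ⟨2 * (i : ℕ), by have := i.isLt; omega⟩)
            (σ ⟨2 * (i : ℕ) + 1, by have := i.isLt; omega⟩)

lemma prod_pairs (n : ℕ) (h : Fin (2 * n) → ℝ) :
    ∏ j, h j = ∏ i : Fin n, (h ⟨2 * (i : ℕ), by have := i.isLt; omega⟩ *
      h ⟨2 * (i : ℕ) + 1, by have := i.isLt; omega⟩) := by
  rw [← Equiv.prod_comp (finProdFinEquiv.trans (finCongr (mul_comm n 2))) h,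
    Fintype.prod_prod_type]
  refine Finset.prod_congr rfl fun i _ => ?_
  rw [Fin.prod_univ_two]
  congr 2 <;> ext <;> simp [finProdFinEquiv, add_comm]

/-- Functions on `Fin (2n)` are `n`-tuples of pairs. -/
def pairEquiv (n : ℕ) (R : Type) : (Fin (2 * n) → R) ≃ (Fin n → R × R) where
  toFun k := fun i => (k ⟨2 * (i : ℕ), by have := i.isLt; omega⟩,
    k ⟨2 * (i : ℕ) + 1, by have := i.isLt; omega⟩)
  invFun f := fun j => if (j : ℕ) % 2 = 0 then (f ⟨(j : ℕ) / 2, by have := j.isLt; omega⟩).1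
    else (f ⟨(j : ℕ) / 2, by have := j.isLt; omega⟩).2
  left_inv k := by
    funext j
    by_cases hj : (j : ℕ) % 2 = 0
    · simp only [hj, if_true]
      congr 1; ext; simp only; omega
    · simp only [hj, if_false]
      congr 1; ext; simp only; omega
  right_inv f := by
    funext i
    have h1 : (2 * (i : ℕ) + 1) / 2 = i := by omega
    have h2 : (2 * (i : ℕ) + 1) % 2 = 1 := by omega
    simp [h1, h2]

lemma prod_conj (n : ℕ) (g : Matrix (Fin (2 * n)) (Fin (2 * n)) ℝ)
    (A : Fin n → Matrix (Fin (2 * n)) (Fin (2 * n)) ℝ) (s : Fin (2 * n) → Fin (2 * n)) :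
    ∏ i : Fin n, (g * A i * g.transpose) (s ⟨2 * (i : ℕ), by have := i.isLt; omega⟩)
            (s ⟨2 * (i : ℕ) + 1, by have := i.isLt; omega⟩) =
    ∑ k : Fin (2 * n) → Fin (2 * n), (∏ j, g (s j) (k j)) *
      ∏ i : Fin n, A i (k ⟨2 * (i : ℕ), by have := i.isLt; omega⟩)
            (k ⟨2 * (i : ℕ) + 1, by have := i.isLt; omega⟩) := by
  have key : ∀ (B : Matrix (Fin (2 * n)) (Fin (2 * n)) ℝ) a b,
      (g * B * g.transpose) a b = ∑ p : Fin (2 * n) × Fin (2 * n),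
        g a p.1 * g b p.2 * B p.1 p.2 := by
    intro B a b
    rw [Fintype.sum_prod_type_right]
    simp only [Matrix.mul_apply, Matrix.transpose_apply, Finset.sum_mul]
    refine Finset.sum_congr rfl fun q _ => Finset.sum_congr rfl fun p _ => ?_
    ring
  simp only [key]
  rw [Fintype.prod_sum, ← Equiv.sum_comp (pairEquiv n (Fin (2 * n)))]
  refine Finset.sum_congr rfl fun k _ => ?_
  rw [prod_pairs, ← Finset.prod_mul_distrib]
  rfl

/-- For every real `(2n)×(2n)` matrix `g` and every `n`-tuple of real `(2n)×(2n)` matrices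
`A₁, …, Aₙ`, one has `F(g·A₁·gᵀ, …, g·Aₙ·gᵀ) = det(g) · F(A₁, …, Aₙ)`. -/
theorem epsContract_conjugation (n : ℕ) (hn : 1 ≤ n)
    (g : Matrix (Fin (2 * n)) (Fin (2 * n)) ℝ)
    (A : Fin n → Matrix (Fin (2 * n)) (Fin (2 * n)) ℝ) :
    epsContract n (fun i => g * A i * g.transpose) = g.det * epsContract n A := by
  unfold epsContract
  simp only [prod_conj, Finset.mul_sum]
  rw [Finset.sum_comm]
  have hdet : ∀ k : Fin (2 * n) → Fin (2 * n),
      ∑ σ : Equiv.Perm (Fin (2 * n)), ((Equiv.Perm.sign σ : ℤ) : ℝ) * ∏ j, g (σ j) (k j)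
        = (g.submatrix id k).det := by
    intro k
    rw [Matrix.det_apply']
    rfl
  simp only [← mul_assoc, ← Finset.sum_mul, hdet]
  symm
  refine Fintype.sum_of_injective (fun σ : Equiv.Perm (Fin (2 * n)) => (σ : Fin (2 * n) → Fin (2 * n)))
    DFunLike.coe_injective _ _ ?_ ?_
  · intro k hk
    have hinj : ¬ Function.Injective k := fun h =>
      hk ⟨Equiv.ofBijective k (Finite.injective_iff_bijective.mp h), rfl⟩
    simp only [Function.Injective, not_forall] at hinj
    obtain ⟨a, b, hab, hne⟩ := hinj
    rw [Matrix.det_zero_of_column_eq hne (by intro i; simp [hab]), zero_mul]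
  · intro σ
    simp only [Matrix.det_permute']
    ring
end

section
/- For every real (2n)×(2n) matrix X and every n-tuple of real (2n)×(2n) matrices A₁, …, Aₙ, one has Σ_{i=1}^{n} F(A₁, …, A_{i−1}, X·A_i + A_i·Xᵀ, A_{i+1}, …, Aₙ) = tr(X) · F(A₁, …, Aₙ); in particular this sum vanishes whenever X is trace-free (for example when X is antisymmetric, as for an so-valued connection form). This is the infinitesimal invariance property of the polynomial f used throughout the paper. -/
theorem eps_offdiag {ι : Type*} [Fintype ι] [DecidableEq ι] (X : Matrix ι ι ℝ)
    (G : (ι → ι) → ℝ) :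
    ∑ p : ι, ∑ q : ι, ∑ σ : Equiv.Perm ι, (if p = q then 0 else
      ((Equiv.Perm.sign σ : ℤ) : ℝ) * (X (σ p) (σ q) * G (Function.update σ p (σ q)))) = 0 := by
  set S := ∑ p : ι, ∑ q : ι, ∑ σ : Equiv.Perm ι, (if p = q then 0 else
      ((Equiv.Perm.sign σ : ℤ) : ℝ) * (X (σ p) (σ q) * G (Function.update σ p (σ q)))) with hS
  have h : S = -S := by
    conv_rhs => rw [hS, Finset.sum_comm]
    rw [hS, ← Finset.sum_neg_distrib]
    refine Finset.sum_congr rfl fun p _ => ?_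
    rw [← Finset.sum_neg_distrib]
    refine Finset.sum_congr rfl fun q _ => ?_
    rw [← Finset.sum_neg_distrib]
    refine Fintype.sum_equiv (Equiv.mulRight (Equiv.swap p q)) _ _ fun σ => ?_
    by_cases hpq : p = q
    · simp [hpq]
    · have hqp : ¬ q = p := fun h => hpq h.symm
      have hu : Function.update (⇑(σ * Equiv.swap p q)) q (σ q)
          = Function.update (⇑σ) p (σ q) := by
        funext x
        by_cases hx : x = q
        · subst hx; simp [Function.update_of_ne hqp]
        · by_cases hx' : x = p
          · subst hx'; simp [Function.update_of_ne hx]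
          · simp [Function.update_of_ne hx, Function.update_of_ne hx',
              Equiv.swap_apply_of_ne_of_ne hx' hx]
      simp only [Equiv.coe_mulRight, hpq, hqp, if_false]
      have h1 : (σ * Equiv.swap p q) q = σ p := by simp
      have h2 : (σ * Equiv.swap p q) p = σ q := by simp
      rw [h1, h2, hu, Equiv.Perm.sign_mul, Equiv.Perm.sign_swap hpq]
      push_cast
      ring
  linarith

theorem eps_general {ι : Type*} [Fintype ι] [DecidableEq ι] (X : Matrix ι ι ℝ)
    (G : (ι → ι) → ℝ) :
    ∑ p : ι, ∑ σ : Equiv.Perm ι, ((Equiv.Perm.sign σ : ℤ) : ℝ) *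
      ∑ k : ι, X (σ p) k * G (Function.update σ p k)
    = X.trace * ∑ σ : Equiv.Perm ι, ((Equiv.Perm.sign σ : ℤ) : ℝ) * G σ := by
  have h0 := eps_offdiag X G
  have h1 : ∀ p : ι, ∑ σ : Equiv.Perm ι, ((Equiv.Perm.sign σ : ℤ) : ℝ) *
      ∑ k : ι, X (σ p) k * G (Function.update σ p k)
      = (∑ σ : Equiv.Perm ι, ((Equiv.Perm.sign σ : ℤ) : ℝ) * (X (σ p) (σ p) * G σ))
        + ∑ q : ι, ∑ σ : Equiv.Perm ι, (if p = q then 0 else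
      ((Equiv.Perm.sign σ : ℤ) : ℝ) * (X (σ p) (σ q) * G (Function.update σ p (σ q)))) := by
    intro p
    rw [Finset.sum_comm (s := (Finset.univ : Finset ι)), ← Finset.sum_add_distrib]
    refine Finset.sum_congr rfl fun σ _ => ?_
    rw [← Equiv.sum_comp σ, Finset.mul_sum, ← Finset.add_sum_erase _ _ (Finset.mem_univ p),
      ← Finset.add_sum_erase (a := p) (f := fun q => if p = q then (0:ℝ) else _) _
        (Finset.mem_univ p)]
    simp only [Function.update_eq_self, if_true, zero_add]
    congr 1
    refine Finset.sum_congr rfl fun q hq => ?_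
    rw [if_neg (Finset.ne_of_mem_erase hq).symm]
  rw [Finset.sum_congr rfl fun p _ => h1 p, Finset.sum_add_distrib, h0, add_zero,
    Finset.sum_comm, Finset.mul_sum]
  refine Finset.sum_congr rfl fun σ _ => ?_
  have ht : X.trace = ∑ p, X (σ p) (σ p) := (Equiv.sum_comp σ fun p => X p p).symm
  rw [ht, Finset.sum_mul]
  refine Finset.sum_congr rfl fun p _ => ?_
  ring

theorem eps_sum_pairs (n : ℕ) (f : Fin (2 * n) → ℝ) :
    ∑ p, f p = ∑ i : Fin n, (f ⟨2 * (i : ℕ), by have := i.isLt; omega⟩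
      + f ⟨2 * (i : ℕ) + 1, by have := i.isLt; omega⟩) := by
  rw [← Equiv.sum_comp (finProdFinEquiv.trans (finCongr (Nat.mul_comm n 2))),
    Fintype.sum_prod_type]
  refine Finset.sum_congr rfl fun i _ => ?_
  rw [Fin.sum_univ_two]
  congr 2 <;> (apply Fin.ext; simp [finProdFinEquiv]) <;> omega

theorem eps_main (n : ℕ) (X : Matrix (Fin (2 * n)) (Fin (2 * n)) ℝ)
    (A : Fin n → Matrix (Fin (2 * n)) (Fin (2 * n)) ℝ) :
    ∑ i : Fin n, epsContract n (Function.update A i (X * A i + A i * X.transpose))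
      = X.trace * epsContract n A := by
  have h := eps_general X (fun f => ∏ i : Fin n,
        A i (f ⟨2 * (i : ℕ), by have := i.isLt; omega⟩)
            (f ⟨2 * (i : ℕ) + 1, by have := i.isLt; omega⟩))
  unfold epsContract
  rw [← h, eps_sum_pairs]
  refine Finset.sum_congr rfl fun i _ => ?_
  rw [← Finset.sum_add_distrib]
  refine Finset.sum_congr rfl fun σ _ => ?_
  rw [← mul_add]
  congr 1
  rw [← Finset.mul_prod_erase _ _ (Finset.mem_univ i)]
  simp only [Function.update_self, Matrix.add_apply, Matrix.mul_apply, Matrix.transpose_apply]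
  rw [add_mul, Finset.sum_mul, Finset.sum_mul]
  congr 1
  · refine Finset.sum_congr rfl fun k _ => ?_
    rw [← Finset.mul_prod_erase (a := i) _ _ (Finset.mem_univ i), mul_assoc]
    congr 2
    · simp [Function.update_apply]
    · refine Finset.prod_congr rfl fun j hj => ?_
      have hji := Finset.ne_of_mem_erase hj
      have hv : (j : ℕ) ≠ i := fun h => hji (Fin.ext h)
      rw [Function.update_of_ne hji, Function.update_of_ne (by simp; omega),
        Function.update_of_ne (by simp; omega)]
  · refine Finset.sum_congr rfl fun k _ => ?_
    rw [← Finset.mul_prod_erase (a := i) _ _ (Finset.mem_univ i), mul_comm (A i _ _), mul_assoc]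
    congr 2
    · simp [Function.update_apply]
    · refine Finset.prod_congr rfl fun j hj => ?_
      have hji := Finset.ne_of_mem_erase hj
      have hv : (j : ℕ) ≠ i := fun h => hji (Fin.ext h)
      rw [Function.update_of_ne hji, Function.update_of_ne (by simp; omega),
        Function.update_of_ne (by simp; omega)]

/-- Infinitesimal invariance of the ε-contraction polynomial: for every real `(2n)×(2n)`
matrix `X` and every `n`-tuple of real `(2n)×(2n)` matrices `A₁, …, Aₙ`,
`Σ_{i=1}^{n} F(A₁, …, X·A_i + A_i·Xᵀ, …, Aₙ) = tr(X) · F(A₁, …, Aₙ)`;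
in particular the sum vanishes whenever `X` is trace-free. -/
theorem epsContract_infinitesimal_invariance (n : ℕ) (hn : 1 ≤ n)
    (X : Matrix (Fin (2 * n)) (Fin (2 * n)) ℝ)
    (A : Fin n → Matrix (Fin (2 * n)) (Fin (2 * n)) ℝ) :
    (∑ i : Fin n,
        epsContract n (Function.update A i (X * A i + A i * X.transpose))
      = X.trace * epsContract n A)
    ∧ (X.trace = 0 →
        ∑ i : Fin n,
          epsContract n (Function.update A i (X * A i + A i * X.transpose)) = 0) := by
  have h := eps_main n X A
  exact ⟨h, fun h0 => by rw [h, h0, zero_mul]⟩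
end

section
/- If f is an antisymmetric function of p variables, then Af is an antisymmetric function of p+1 variables; that is, for every permutation σ of the p+1 arguments, (Af)(x_{σ(1)}, …, x_{σ(p+1)}) = sgn(σ) · (Af)(x₁, …, x_{p+1}). -/
/-- A function `f : X^p → M` is antisymmetric if
`f(x_{σ(1)}, …, x_{σ(p)}) = sgn(σ) · f(x₁, …, x_p)` for every permutation σ. -/
def AntisymmetricFn {X M : Type*} [AddCommGroup M] (p : ℕ) (f : (Fin p → X) → M) : Prop :=
  ∀ (σ : Equiv.Perm (Fin p)) (x : Fin p → X), f (x ∘ σ) = (Equiv.Perm.sign σ : ℤ) • f x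

/-- The antisymmetrising operator:
`(Af)(x₁,…,x_p,x_{p+1}) = f(x₁,…,x_p) − Σ_{i=1}^{p} f(x₁,…,x_{i−1},x_{p+1},x_{i+1},…,x_p)`. -/
def Aop {X M : Type*} [AddCommGroup M] (p : ℕ) (f : (Fin p → X) → M) :
    (Fin (p + 1) → X) → M :=
  fun x =>
    f (fun i => x i.castSucc)
      - ∑ i : Fin p, f (Function.update (fun j => x j.castSucc) i (x (Fin.last p)))

/-- A permutation of `Fin (p+1)` fixing the last element restricts to `Fin p`. -/
lemma exists_restrict_perm (p : ℕ) (ρ : Equiv.Perm (Fin (p + 1)))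
    (h : ρ (Fin.last p) = Fin.last p) :
    ∃ ρ' : Equiv.Perm (Fin p), Equiv.Perm.sign ρ' = Equiv.Perm.sign ρ ∧
      ∀ i, ρ (Fin.castSucc i) = Fin.castSucc (ρ' i) := by
  let e := finSuccEquivLast (n := p)
  let q : Equiv.Perm (Option (Fin p)) := (e.symm.trans ρ).trans e
  have hq : q none = none := by simp [q, e, h]
  have hm : Equiv.optionCongr (Equiv.removeNone q) = q := by
    have := map_equiv_removeNone q
    rw [hq, Equiv.swap_self] at this
    rw [this]
    ext1 x
    rfl
  refine ⟨Equiv.removeNone q, ?_, fun i => ?_⟩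
  · rw [← Equiv.optionCongr_sign, hm]
    exact Equiv.Perm.sign_symm_trans_trans ρ e
  · have h1 : q (some i) = some (Equiv.removeNone q i) := by
      conv_lhs => rw [← hm]
      rfl
    have h2 : e (ρ (Fin.castSucc i)) = some (Equiv.removeNone q i) := by
      rw [← h1]; simp [q, e]
    apply e.injective
    rw [h2]; simp [e]

lemma signed_eq_of_last_eq {X M : Type*} [AddCommGroup M] (p : ℕ)
    (f : (Fin p → X) → M) (hf : AntisymmetricFn p f) (x : Fin (p + 1) → X)
    (τ τ' : Equiv.Perm (Fin (p + 1))) (h : τ (Fin.last p) = τ' (Fin.last p)) :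
    (Equiv.Perm.sign τ : ℤ) • f (fun i => x (τ i.castSucc)) =
      (Equiv.Perm.sign τ' : ℤ) • f (fun i => x (τ' i.castSucc)) := by
  obtain ⟨ρ', hs, hρ⟩ := exists_restrict_perm p (τ⁻¹ * τ') (by simp [← h])
  have h1 : ∀ i : Fin p, τ' i.castSucc = τ (Fin.castSucc (ρ' i)) := by
    intro i
    rw [← hρ]; simp
  have h2 := hf ρ' (fun i => x (τ i.castSucc))
  have h3 : (fun i : Fin p => x (τ' i.castSucc)) = (fun i => x (τ i.castSucc)) ∘ ρ' := by
    funext i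
    simp [h1]
  rw [h3, h2, hs, smul_smul]
  congr 1
  rw [← Units.val_mul, ← Equiv.Perm.sign_mul, Equiv.Perm.sign_mul, Equiv.Perm.sign_mul,
    Equiv.Perm.sign_inv, mul_comm, mul_assoc, Int.units_mul_self, mul_one]

lemma Aop_eq_sum {X M : Type*} [AddCommGroup M] (p : ℕ)
    (f : (Fin p → X) → M) (x : Fin (p + 1) → X) :
    Aop p f x = ∑ k : Fin (p + 1), (Equiv.Perm.sign (Equiv.swap k (Fin.last p)) : ℤ) •
      f (fun i => x (Equiv.swap k (Fin.last p) i.castSucc)) := by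
  rw [Fin.sum_univ_castSucc, Aop, sub_eq_add_neg, add_comm, ← Finset.sum_neg_distrib]
  congr 1
  · refine Finset.sum_congr rfl fun k _ => ?_
    rw [Equiv.Perm.sign_swap (Fin.castSucc_lt_last k).ne]
    simp only [Units.val_neg, Units.val_one, neg_smul, one_smul]
    congr 2
    funext i
    by_cases hik : i = k
    · subst hik; simp
    · rw [Function.update_of_ne hik, Equiv.swap_apply_of_ne_of_ne]
      · simpa using hik
      · exact (Fin.castSucc_lt_last i).ne
  · simp

/-- If `f` is an antisymmetric function of `p` variables, then `Af` is an antisymmetric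
function of `p+1` variables. -/
theorem antisymmetricFn_Aop {X M : Type*} [AddCommGroup M] (p : ℕ)
    (f : (Fin p → X) → M) (hf : AntisymmetricFn p f) :
    AntisymmetricFn (p + 1) (Aop p f) := by
  intro σ x
  rw [Aop_eq_sum, Aop_eq_sum, Finset.smul_sum]
  conv_rhs => rw [← Equiv.sum_comp σ]
  refine Finset.sum_congr rfl fun k _ => ?_
  rw [← signed_eq_of_last_eq p f hf x (σ * Equiv.swap k (Fin.last p))
    (Equiv.swap (σ k) (Fin.last p)) (by simp), smul_smul, Equiv.Perm.sign_mul,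
    ← Units.val_mul, ← mul_assoc, Int.units_mul_self, one_mul]
  rfl
end

section
/- The map T restricts to a bijection from the open unit cube (0,1)^p onto the open standard p-simplex Δ_p, with inverse given by S(t)_i = t_i / (1 − Σ_{j<i} t_j). -/
/-- The reparametrisation `T : ℝ^p → ℝ^p`, `(T s)_i = s_i · ∏_{j<i} (1 − s_j)`. -/
def Tmap (p : ℕ) (s : Fin p → ℝ) : Fin p → ℝ :=
  fun i => s i * ∏ j ∈ Finset.Iio i, (1 - s j)

/-- The inverse reparametrisation `S : ℝ^p → ℝ^p`, `(S t)_i = t_i / (1 − Σ_{j<i} t_j)`. -/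
noncomputable def Smap (p : ℕ) (t : Fin p → ℝ) : Fin p → ℝ :=
  fun i => t i / (1 - ∑ j ∈ Finset.Iio i, t j)

/-- The open unit cube `(0,1)^p`. -/
def unitCube (p : ℕ) : Set (Fin p → ℝ) := {s | ∀ i, s i ∈ Set.Ioo (0 : ℝ) 1}

/-- The open standard `p`-simplex `Δ_p = {t : t_i > 0, Σ_i t_i < 1}`. -/
def openSimplex (p : ℕ) : Set (Fin p → ℝ) := {t | (∀ i, 0 < t i) ∧ ∑ i, t i < 1}

theorem prod_Iio_eq (p : ℕ) (s : Fin p → ℝ) (i : Fin p) :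
    ∏ j ∈ Finset.Iio i, (1 - s j) = 1 - ∑ j ∈ Finset.Iio i, Tmap p s j := by
  rw [Finset.prod_one_sub_ordered]
  congr 1
  refine Finset.sum_congr rfl fun j hj => ?_
  unfold Tmap
  congr 1
  refine Finset.prod_congr ?_ fun _ _ => rfl
  ext k
  simp only [Finset.mem_filter, Finset.mem_Iio] at hj ⊢
  exact ⟨fun h => h.2, fun h => ⟨h.trans hj, h⟩⟩

theorem prod_univ_eq (p : ℕ) (s : Fin p → ℝ) :
    ∏ j, (1 - s j) = 1 - ∑ j, Tmap p s j := by
  rw [Finset.prod_one_sub_ordered]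
  congr 1
  refine Finset.sum_congr rfl fun j hj => ?_
  unfold Tmap
  congr 1
  refine Finset.prod_congr ?_ fun _ _ => rfl
  ext k
  simp

theorem Tmap_mapsTo (p : ℕ) : Set.MapsTo (Tmap p) (unitCube p) (openSimplex p) := by
  intro s hs
  have hpos : ∀ j, 0 < 1 - s j := fun j => sub_pos.2 (hs j).2
  refine ⟨fun i => mul_pos (hs i).1 (Finset.prod_pos fun j _ => hpos j), ?_⟩
  have h := prod_univ_eq p s
  have h2 : 0 < ∏ j, (1 - s j) := Finset.prod_pos fun j _ => hpos j
  linarith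

theorem simplex_partial (p : ℕ) (t : Fin p → ℝ) (ht : t ∈ openSimplex p) (i : Fin p) :
    t i < 1 - ∑ j ∈ Finset.Iio i, t j := by
  have h1 : ∑ j ∈ insert i (Finset.Iio i), t j ≤ ∑ j, t j :=
    Finset.sum_le_sum_of_subset_of_nonneg (Finset.subset_univ _) fun j _ _ => (ht.1 j).le
  rw [Finset.sum_insert (by simp)] at h1
  have := ht.2
  linarith

theorem Smap_mapsTo (p : ℕ) : Set.MapsTo (Smap p) (openSimplex p) (unitCube p) := by
  intro t ht i
  have h := simplex_partial p t ht i
  have h0 := ht.1 i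
  exact ⟨div_pos h0 (h0.trans h), (div_lt_one (h0.trans h)).2 h⟩

theorem Tmap_Smap (p : ℕ) (t : Fin p → ℝ) (ht : t ∈ openSimplex p) :
    Tmap p (Smap p t) = t := by
  funext i
  induction i using WellFoundedLT.induction with
  | ind i ih =>
    have h : ∏ j ∈ Finset.Iio i, (1 - Smap p t j) = 1 - ∑ j ∈ Finset.Iio i, t j := by
      rw [prod_Iio_eq]
      congr 1
      exact Finset.sum_congr rfl fun j hj => ih j (Finset.mem_Iio.1 hj)
    change Smap p t i * ∏ j ∈ Finset.Iio i, (1 - Smap p t j) = t i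
    rw [h]
    exact div_mul_cancel₀ _ (ne_of_gt ((ht.1 i).trans (simplex_partial p t ht i)))

theorem Smap_Tmap (p : ℕ) (s : Fin p → ℝ) (hs : s ∈ unitCube p) :
    Smap p (Tmap p s) = s := by
  funext i
  change Tmap p s i / (1 - ∑ j ∈ Finset.Iio i, Tmap p s j) = s i
  rw [← prod_Iio_eq]
  exact mul_div_cancel_right₀ _ (ne_of_gt (Finset.prod_pos fun j _ => sub_pos.2 (hs j).2))

/-- The map `T` restricts to a bijection from the open unit cube `(0,1)^p` onto the open
standard `p`-simplex `Δ_p`, with inverse given by `S(t)_i = t_i / (1 − Σ_{j<i} t_j)`. -/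
theorem Tmap_bijOn_invOn (p : ℕ) :
    Set.BijOn (Tmap p) (unitCube p) (openSimplex p) ∧
      Set.InvOn (Smap p) (Tmap p) (unitCube p) (openSimplex p) := by
  have h : Set.InvOn (Smap p) (Tmap p) (unitCube p) (openSimplex p) :=
    ⟨fun s hs => Smap_Tmap p s hs, fun t ht => Tmap_Smap p t ht⟩
  exact ⟨h.bijOn (Tmap_mapsTo p) (Smap_mapsTo p), h⟩
end

section
/- The map S defined by S(t)_i = t_i / (1 − Σ_{j<i} t_j) is differentiable at every t ∈ ℝ^p at which all the quantities 1 − Σ_{j<i} t_j (for i = 0, …, p−1) are nonzero (in particular at every t ∈ Δ_p), and at such a point the determinant of its derivative equals ∏_{i=0}^{p−1} (1 − Σ_{j<i} t_j)^{−1}. -/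
/-- Explicit derivative of each coordinate of `Smap`. -/
theorem hasFDerivAt_Smap (p : ℕ) (t : Fin p → ℝ)
    (h : ∀ i : Fin p, 1 - ∑ j ∈ Finset.Iio i, t j ≠ 0) :
    HasFDerivAt (Smap p) (ContinuousLinearMap.pi fun i : Fin p =>
      t i • ((-((1 - ∑ j ∈ Finset.Iio i, t j) ^ 2)⁻¹) •
        (-(∑ j ∈ Finset.Iio i, ContinuousLinearMap.proj (R := ℝ) (φ := fun _ : Fin p => ℝ) j)))
      + (1 - ∑ j ∈ Finset.Iio i, t j)⁻¹ •
        ContinuousLinearMap.proj (R := ℝ) (φ := fun _ : Fin p => ℝ) i) t := by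
  unfold Smap
  rw [hasFDerivAt_pi]
  intro i
  simp only [div_eq_mul_inv]
  have hd : HasFDerivAt (fun t : Fin p → ℝ => 1 - ∑ j ∈ Finset.Iio i, t j)
      (-(∑ j ∈ Finset.Iio i, ContinuousLinearMap.proj (R := ℝ) (φ := fun _ : Fin p => ℝ) j)) t :=
    (HasFDerivAt.fun_sum fun j _ => hasFDerivAt_apply j t).const_sub 1
  exact (hasFDerivAt_apply i t).mul ((hasDerivAt_inv (h i)).comp_hasFDerivAt t hd)

/-- The map `S` is differentiable at every `t ∈ ℝ^p` at which all the quantities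
`1 − Σ_{j<i} t_j` are nonzero (in particular at every `t ∈ Δ_p`), and at such a point the
determinant of its derivative equals `∏_{i} (1 − Σ_{j<i} t_j)⁻¹`. -/
theorem differentiableAt_Smap_and_det_fderiv (p : ℕ) :
    (∀ t : Fin p → ℝ, (∀ i : Fin p, 1 - ∑ j ∈ Finset.Iio i, t j ≠ 0) →
      DifferentiableAt ℝ (Smap p) t ∧
        LinearMap.det ((fderiv ℝ (Smap p) t).toLinearMap)
          = ∏ i : Fin p, (1 - ∑ j ∈ Finset.Iio i, t j)⁻¹) ∧
    (∀ t ∈ openSimplex p, ∀ i : Fin p, 1 - ∑ j ∈ Finset.Iio i, t j ≠ 0) := by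
  refine ⟨fun t h => ⟨(hasFDerivAt_Smap p t h).differentiableAt, ?_⟩, ?_⟩
  · rw [(hasFDerivAt_Smap p t h).fderiv, ← LinearMap.det_toMatrix',
      Matrix.det_of_isLowerTriangular]
    · refine Finset.prod_congr rfl fun i _ => ?_
      simp [LinearMap.toMatrix'_apply, Pi.single_apply]
    · intro i j hij
      have hij' : i < j := hij
      simp [LinearMap.toMatrix'_apply, Pi.single_apply, hij'.ne, hij'.le]
  · rintro t ⟨h0, h1⟩ i
    have := Finset.sum_le_sum_of_subset_of_nonneg (Finset.subset_univ (Finset.Iio i))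
      (fun j _ _ => (h0 j).le)
    exact (by linarith : 0 < 1 - ∑ j ∈ Finset.Iio i, t j).ne'
end

section
/- Under these hypotheses, Ω = Σ_{i,j} C_i C_j · A_{ij}, where A_{ij} := ½ (Ω_i + Ω_j − (ω_i − ω_j)·(ω_i − ω_j)). That is, the curvature of the interpolated connection is the weighted average of the pairwise combinations A_{ij} built from the individual curvatures and the squared differences of the connections. -/
/-- Let `A` be an associative real algebra, `ω_i, e_i ∈ A` (`e_i` playing the role of `dω_i`),
and real weights `C_i` with `Σ_i C_i = 1`. With curvatures `Ω_i := e_i + ω_i·ω_i` and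
interpolated curvature `Ω := Σ_i C_i e_i + (Σ_i C_i ω_i)·(Σ_i C_i ω_i)`, one has
`Ω = Σ_{i,j} C_i C_j · A_{ij}` where
`A_{ij} := ½ (Ω_i + Ω_j − (ω_i − ω_j)·(ω_i − ω_j))`. -/
theorem interpolated_curvature_eq_weighted_average
    {ι : Type*} [Fintype ι] {A : Type*} [Ring A] [Algebra ℝ A]
    (ω e : ι → A) (C : ι → ℝ) (hC : ∑ i, C i = 1) :
    (∑ i, C i • e i) + (∑ i, C i • ω i) * (∑ i, C i • ω i)
      = ∑ i, ∑ j, (C i * C j) •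
          ((1 / 2 : ℝ) •
            ((e i + ω i * ω i) + (e j + ω j * ω j) - (ω i - ω j) * (ω i - ω j))) := by
  have h1 : ∑ i, ∑ j, (C i * C j) • e i = ∑ i, C i • e i := by
    refine Finset.sum_congr rfl fun i _ => ?_
    rw [← Finset.sum_smul, ← Finset.mul_sum, hC, mul_one]
  have h2 : ∑ i, ∑ j, (C i * C j) • e j = ∑ i, C i • e i := by
    rw [Finset.sum_comm, ← h1]
    simp only [mul_comm]
  have h3 : ∑ i, ∑ j, (C i * C j) • (ω i * ω j)
      = (∑ i, C i • ω i) * (∑ i, C i • ω i) := by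
    rw [Finset.sum_mul_sum]
    simp only [smul_mul_smul_comm]
  have h4 : ∑ i, ∑ j, (C i * C j) • (ω j * ω i)
      = (∑ i, C i • ω i) * (∑ i, C i • ω i) := by
    rw [Finset.sum_comm, ← h3]
    refine Finset.sum_congr rfl fun i _ => Finset.sum_congr rfl fun j _ => ?_
    rw [mul_comm (C j)]
  have key : ∀ i j, (C i * C j) • ((1 / 2 : ℝ) •
      ((e i + ω i * ω i) + (e j + ω j * ω j) - (ω i - ω j) * (ω i - ω j)))
      = (1 / 2 : ℝ) • ((C i * C j) • e i + (C i * C j) • e j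
        + (C i * C j) • (ω i * ω j) + (C i * C j) • (ω j * ω i)) := by
    intro i j
    rw [smul_comm, ← smul_add, ← smul_add, ← smul_add]
    congr 2
    noncomm_ring
  simp only [key, ← Finset.smul_sum, Finset.sum_add_distrib]
  rw [h1, h2, h3, h4]
  module
end

section
/- Under these hypotheses, α₂ · ⟨φ, L(Lφ + c·φ)⟩ = α₁ · ⟨ψ₂, Lψ₂⟩ − α₁ · ⟨ψ₁, Lψ₁ + c·ψ₁⟩. That is, after the field redefinition the higher-derivative quadratic form splits into a massless piece and a massive piece which enters with the opposite (ghost) sign. -/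
open scoped RealInnerProductSpace

/-- Field redefinition for the higher-derivative quadratic form: with
`c := α₁/α₂`, `ψ₁ := (α₂/α₁)·Lφ` and `ψ₂ := (α₂/α₁)·(Lφ + c·φ)`, one has
`α₂ · ⟨φ, L(Lφ + c·φ)⟩ = α₁ · ⟨ψ₂, Lψ₂⟩ − α₁ · ⟨ψ₁, Lψ₁ + c·ψ₁⟩`:
the quadratic form splits into a massless piece and a massive ghost piece. -/
theorem higher_derivative_ghost_split
    {V : Type*} [NormedAddCommGroup V] [InnerProductSpace ℝ V]
    (L : V →ₗ[ℝ] V) (hL : ∀ x y : V, ⟪L x, y⟫ = ⟪x, L y⟫)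
    (α₁ α₂ : ℝ) (hα₁ : α₁ ≠ 0) (hα₂ : α₂ ≠ 0) (φ : V) :
    α₂ * ⟪φ, L (L φ + (α₁ / α₂) • φ)⟫
      = α₁ * ⟪(α₂ / α₁) • (L φ + (α₁ / α₂) • φ),
              L ((α₂ / α₁) • (L φ + (α₁ / α₂) • φ))⟫
        - α₁ * ⟪(α₂ / α₁) • L φ,
                L ((α₂ / α₁) • L φ) + (α₁ / α₂) • ((α₂ / α₁) • L φ)⟫ := by
  have h1 : ⟪φ, L (L φ)⟫ = ⟪L φ, L φ⟫ := (hL φ (L φ)).symm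
  simp only [map_add, map_smul, inner_add_left, inner_add_right,
    real_inner_smul_left, real_inner_smul_right, h1]
  field_simp
  ring
end
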